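/- Let I be the ideal of R = ℚ[x,y,z] generated by xy²z, x²yz, y⁵, x⁵, z⁶, xyz⁵. Then I has height 3, the minimal number of generators of I is 6, and the quotient ring R/I is a finite-dimensional ℚ-vector space. -/

import Mathlib

/-!
A prime containing `I` contains powers of all three variables, hence the variables themselves, hence
the whole ideal of polynomials without constant term. The height of such a prime is at least `3`
because of the chain `0 ⊂ (x) ⊂ (x, y) ⊂ (x, y, z)` (the ideals are encoded as kernels of
substitutions), and at most `3` because the Krull dimension of `ℚ[x, y, z]` is `3`.

The quotient is of finite type over `ℚ` and integral, since the classes of the variables are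
nilpotent; so it is finite-dimensional.

For the number of generators, let `φ : R → ℚ⁶` read off the coefficients at the six given monomials.
No one of them divides another, so `φ (r * f) = r(0) • φ f` for `f ∈ I` (`genCoeffs_mul`). Thus if `s`
generates `I`, then `φ s` spans `φ I`, which is all of `ℚ⁶`, and `s` has at least `6` elements.
-/

open MvPolynomial

/-- The height of an ideal: the infimum of the heights of prime ideals containing it. -/
noncomputable def idealHeight {R : Type*} [CommRing R] (I : Ideal R) : ℕ∞ :=
  ⨅ p ∈ {p : PrimeSpectrum R | I ≤ p.asIdeal}, Order.height p

/-- The minimal number of generators of an ideal: the smallest cardinality of a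
set of elements of the ring generating it as an ideal. -/
noncomputable def minNumGens {R : Type*} [CommRing R] (I : Ideal R) : ℕ :=
  sInf {n : ℕ | ∃ s : Finset R, s.card = n ∧ Ideal.span (s : Set R) = I}

noncomputable abbrev x : MvPolynomial (Fin 3) ℚ := X 0
noncomputable abbrev y : MvPolynomial (Fin 3) ℚ := X 1
noncomputable abbrev z : MvPolynomial (Fin 3) ℚ := X 2

/-- The exponent vectors of the six generating monomials. -/
noncomputable def expo (i : Fin 6) : Fin 3 →₀ ℕ :=
  Finsupp.equivFunOnFinite.symm
    ((![![1, 2, 1], ![2, 1, 1], ![0, 5, 0], ![5, 0, 0], ![0, 0, 6], ![1, 1, 5]] :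
      Fin 6 → Fin 3 → ℕ) i)

/-- The generating monomials form an antichain for divisibility. -/
lemma expo_le_iff (i j : Fin 6) : expo i ≤ expo j ↔ i = j := by
  have h : expo i ≤ expo j ↔ ∀ k : Fin 3,
      (![![1, 2, 1], ![2, 1, 1], ![0, 5, 0], ![5, 0, 0], ![0, 0, 6], ![1, 1, 5]] :
        Fin 6 → Fin 3 → ℕ) i k ≤
      (![![1, 2, 1], ![2, 1, 1], ![0, 5, 0], ![5, 0, 0], ![0, 0, 6], ![1, 1, 5]] :
        Fin 6 → Fin 3 → ℕ) j k := Iff.rfl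
  rw [h]
  clear h
  revert i j
  decide

lemma monomial_eq_prod (a b c : ℕ) :
    monomial (Finsupp.equivFunOnFinite.symm ![a, b, c]) (1 : ℚ) = x ^ a * y ^ b * z ^ c := by
  rw [monomial_eq, Finsupp.prod_fintype _ _ (by simp)]
  simp [Fin.prod_univ_three]

lemma range_monomial_expo :
    Set.range (fun i => monomial (expo i) (1 : ℚ)) =
      {x*y^2*z, x^2*y*z, y^5, x^5, z^6, x*y*z^5} := by
  have h (i : Fin 6) : monomial (expo i) (1 : ℚ) =
      ![x*y^2*z, x^2*y*z, y^5, x^5, z^6, x*y*z^5] i := by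
    fin_cases i <;> simp [expo, monomial_eq_prod]
  rw [funext h]
  simp only [Matrix.range_cons, Matrix.range_empty, Set.union_empty, Set.singleton_union]

/-- The coefficients of a polynomial at the six generating monomials. -/
noncomputable def genCoeffs : MvPolynomial (Fin 3) ℚ →ₗ[ℚ] (Fin 6 → ℚ) :=
  LinearMap.pi fun i => lcoeff ℚ (expo i)

lemma genCoeffs_apply (f : MvPolynomial (Fin 3) ℚ) (i : Fin 6) : genCoeffs f i = coeff (expo i) f := rfl

lemma genCoeffs_monomial (j : Fin 6) : genCoeffs (monomial (expo j) 1) = Pi.single j 1 := by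
  ext i
  have : expo j = expo i ↔ i = j :=
    ⟨fun h => ((expo_le_iff j i).1 h.le).symm, fun h => h ▸ rfl⟩
  simp [genCoeffs_apply, coeff_monomial, Pi.single_apply, this]

/-- On the ideal, `genCoeffs` factors through `I / (x, y, z) I`. -/
lemma genCoeffs_mul (f : MvPolynomial (Fin 3) ℚ)
    (hf : f ∈ Ideal.span (Set.range fun i => monomial (expo i) (1 : ℚ)))
    (r : MvPolynomial (Fin 3) ℚ) : genCoeffs (r * f) = coeff 0 r • genCoeffs f := by
  induction hf using Submodule.span_induction generalizing r with
  | mem f hf =>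
    obtain ⟨j, rfl⟩ := hf
    ext i
    simp only [genCoeffs_monomial, genCoeffs_apply, coeff_mul_monomial', expo_le_iff]
    by_cases h : j = i
    · subst h; simp
    · simp [h, Ne.symm h]
  | zero => simp
  | add f g _ _ hf hg => simp [mul_add, hf, hg]
  | smul a f _ hf =>
    rw [smul_eq_mul, ← mul_assoc, hf, hf, smul_smul]
    congr 1
    exact map_mul constantCoeff r a

lemma card_le_of_span {s : Finset (MvPolynomial (Fin 3) ℚ)}
    (hs : Ideal.span (s : Set (MvPolynomial (Fin 3) ℚ)) =
      Ideal.span (Set.range fun i => monomial (expo i) (1 : ℚ))) : 6 ≤ s.card := by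
  classical
  have key : ∀ f ∈ Ideal.span (s : Set (MvPolynomial (Fin 3) ℚ)),
      genCoeffs f ∈ Submodule.span ℚ ((s.image genCoeffs : Finset _) : Set (Fin 6 → ℚ)) := by
    intro f hf
    induction hf using Submodule.span_induction with
    | mem f hf => exact Submodule.subset_span (by simpa using ⟨f, hf, rfl⟩)
    | zero => simp
    | add f g _ _ hf hg => rw [map_add]; exact add_mem hf hg
    | smul a f h hf =>
      rw [smul_eq_mul, genCoeffs_mul f (hs ▸ h)]
      exact Submodule.smul_mem _ _ hf
  have top : Submodule.span ℚ ((s.image genCoeffs : Finset _) : Set (Fin 6 → ℚ)) = ⊤ := by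
    rw [eq_top_iff, ← (Pi.basisFun ℚ (Fin 6)).span_eq, Submodule.span_le]
    rintro _ ⟨j, rfl⟩
    rw [Pi.basisFun_apply, ← genCoeffs_monomial]
    exact key _ (hs ▸ Ideal.subset_span ⟨j, rfl⟩)
  have := finrank_span_finset_le_card (R := ℚ) (s.image genCoeffs)
  rw [Set.finrank, top, finrank_top, Module.finrank_fin_fun] at this
  exact this.trans Finset.card_image_le

lemma minNumGens_eq :
    minNumGens (Ideal.span (Set.range fun i => monomial (expo i) (1 : ℚ))) = 6 := by
  classical
  have h : Ideal.span ((Finset.univ.image fun i => monomial (expo i) (1 : ℚ) : Finset _) :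
      Set (MvPolynomial (Fin 3) ℚ)) =
      Ideal.span (Set.range fun i => monomial (expo i) (1 : ℚ)) := by simp
  apply le_antisymm
  · refine Nat.sInf_le ⟨_, le_antisymm ?_ (card_le_of_span h), h⟩
    exact Finset.card_image_le
  · refine le_csInf ⟨_, _, rfl, h⟩ ?_
    rintro _ ⟨s, rfl, hs⟩
    exact card_le_of_span hs

/-- An ideal containing the variables contains every polynomial without constant term. -/
lemma mem_of_X_mem {p : Ideal (MvPolynomial (Fin 3) ℚ)} (hp : ∀ i, X i ∈ p)
    {f : MvPolynomial (Fin 3) ℚ} (hf : constantCoeff f = 0) : f ∈ p := by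
  have h (g : MvPolynomial (Fin 3) ℚ) : g - C (constantCoeff g) ∈ p := by
    induction g using MvPolynomial.induction_on with
    | C a => simp
    | add g h hg hh =>
      rw [map_add, map_add, add_sub_add_comm]
      exact add_mem hg hh
    | mul_X g i _ => simpa using Ideal.mul_mem_left _ _ (hp i)
  simpa [hf] using h f

/-- The prime ideal of polynomials that vanish under a given substitution. -/
noncomputable def kerPrime (v : Fin 3 → MvPolynomial (Fin 3) ℚ) :
    PrimeSpectrum (MvPolynomial (Fin 3) ℚ) :=
  ⟨RingHom.ker (aeval (R := ℚ) v), RingHom.ker_isPrime _⟩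

lemma mem_kerPrime {v : Fin 3 → MvPolynomial (Fin 3) ℚ} {f : MvPolynomial (Fin 3) ℚ} :
    f ∈ (kerPrime v).asIdeal ↔ aeval v f = 0 := Iff.rfl

lemma kerPrime_lt {v w : Fin 3 → MvPolynomial (Fin 3) ℚ} (h : ∀ i, aeval w (v i) = w i)
    (i : Fin 3) (hv : v i ≠ 0) (hw : w i = 0) : kerPrime v < kerPrime w := by
  refine lt_of_le_of_ne (fun f hf => ?_) fun e => hv ?_
  · rw [mem_kerPrime] at hf ⊢
    have hc : (aeval w).comp (aeval v) = (aeval w : _ →ₐ[ℚ] MvPolynomial (Fin 3) ℚ) := by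
      ext1 i; rw [AlgHom.comp_apply, aeval_X, aeval_X, h]
    rw [← hc, AlgHom.comp_apply, hf, map_zero]
  · have : X i ∈ (kerPrime v).asIdeal := by rw [e, mem_kerPrime]; simpa
    simpa [mem_kerPrime] using this

lemma three_le_height {p : PrimeSpectrum (MvPolynomial (Fin 3) ℚ)}
    (hp : ∀ i, X i ∈ p.asIdeal) : 3 ≤ Order.height p := by
  have h0 : kerPrime ![x, y, z] < kerPrime ![0, y, z] :=
    kerPrime_lt (by simp [Fin.forall_fin_succ]) 0 (by simp) (by simp)
  have h1 : kerPrime ![0, y, z] < kerPrime ![0, 0, z] :=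
    kerPrime_lt (by simp [Fin.forall_fin_succ]) 1 (by simp) (by simp)
  have h2 : kerPrime ![0, 0, z] < kerPrime ![0, 0, 0] :=
    kerPrime_lt (by simp [Fin.forall_fin_succ]) 2 (by simp) (by simp)
  have h3 : kerPrime ![0, 0, 0] ≤ p := by
    intro f hf
    refine mem_of_X_mem hp ?_
    have e : (![0, 0, 0] : Fin 3 → MvPolynomial (Fin 3) ℚ) = fun _ => 0 := by
      ext1 i; fin_cases i <;> rfl
    rw [mem_kerPrime, e, show (fun _ : Fin 3 => (0 : MvPolynomial (Fin 3) ℚ)) = 0 from rfl,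
      aeval_zero] at hf
    simpa using hf
  have a0 := Order.height_add_one_le h0
  have a1 := Order.height_add_one_le h1
  have a2 := Order.height_add_one_le (h2.trans_le h3)
  calc (3 : ℕ∞) = 0 + 1 + 1 + 1 := by norm_num
    _ ≤ Order.height (kerPrime ![x, y, z]) + 1 + 1 + 1 := by gcongr; exact zero_le
    _ ≤ Order.height (kerPrime ![0, y, z]) + 1 + 1 := by gcongr
    _ ≤ Order.height (kerPrime ![0, 0, z]) + 1 := by gcongr
    _ ≤ _ := a2

lemma height_le_three (p : PrimeSpectrum (MvPolynomial (Fin 3) ℚ)) : Order.height p ≤ 3 := by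
  have h := Order.height_le_krullDim p
  have hd : Order.krullDim (PrimeSpectrum (MvPolynomial (Fin 3) ℚ)) = 3 := by
    have := MvPolynomial.ringKrullDim_of_isNoetherianRing (R := ℚ) (ι := Fin 3)
    rw [ringKrullDim_eq_zero_of_field] at this
    rw [← ringKrullDim, this]
    simp
  rw [hd] at h
  exact WithBot.coe_le_coe.1 h

theorem stmt_9 (I : Ideal (MvPolynomial (Fin 3) ℚ))
    (hI : I = Ideal.span {x*y^2*z, x^2*y*z, y^5, x^5, z^6, x*y*z^5}) :
    idealHeight I = 3 ∧ minNumGens I = 6 ∧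
    FiniteDimensional ℚ (MvPolynomial (Fin 3) ℚ ⧸ I) := by
  have hX : ∀ i : Fin 3, (X i : MvPolynomial (Fin 3) ℚ) ^ 6 ∈ I := by
    have hx : x ^ 5 ∈ I := hI ▸ Ideal.subset_span (by simp)
    have hy : y ^ 5 ∈ I := hI ▸ Ideal.subset_span (by simp)
    have hz : z ^ 6 ∈ I := hI ▸ Ideal.subset_span (by simp)
    intro i
    fin_cases i
    · exact I.pow_mem_of_pow_mem hx (by norm_num)
    · exact I.pow_mem_of_pow_mem hy (by norm_num)
    · exact hz
  refine ⟨le_antisymm ?_ ?_, ?_, ?_⟩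
  · refine iInf₂_le_of_le (kerPrime 0) ?_ (height_le_three _)
    simp only [Set.mem_ofPred_eq, hI, Ideal.span_le]
    rintro f (rfl | rfl | rfl | rfl | rfl | rfl) <;> simp [mem_kerPrime]
  · refine le_iInf₂ fun p hp => three_le_height fun i => ?_
    exact p.isPrime.mem_of_pow_mem 6 (hp (hX i))
  · rw [hI, ← range_monomial_expo, minNumGens_eq]
  · have : Algebra.IsIntegral ℚ (MvPolynomial (Fin 3) ℚ ⧸ I) := by
      refine ⟨fun q => ?_⟩
      obtain ⟨f, rfl⟩ := Ideal.Quotient.mk_surjective q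
      induction f using MvPolynomial.induction_on with
      | C a => exact isIntegral_algebraMap (R := ℚ) (A := MvPolynomial (Fin 3) ℚ ⧸ I) (x := a)
      | add f g hf hg => rw [map_add]; exact hf.add hg
      | mul_X f i hf =>
        rw [map_mul]
        refine hf.mul (IsIntegral.of_pow (n := 6) (by norm_num) ?_)
        rw [← map_pow, Ideal.Quotient.eq_zero_iff_mem.2 (hX i)]
        exact isIntegral_zero
    exact Algebra.IsIntegral.finite
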